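/- arXiv:1805.04337 — 3 statements merged into one kernel-verified Lean document; each statement's English description precedes it below -/
import Mathlib

section
/- Let n ≥ 4 be even, let ν and c_R be positive integers with c_R ≤ n−1, and for each i ∈ Z_n let H_i = Z_n \ {i + n/2}. Let S : Z_n → P({1,…,ν}) be a system state, write A(u) = {i ∈ Z_n : u ∈ S(i)}, and suppose some version L ∈ {1,…,ν} satisfies |A(L)| ≥ n−1 while every version u with u > L satisfies |A(u)| ≤ n−2. For a server i with {u ∈ S(i) : |A(u) ∩ H_i| ≥ n−2} nonempty, define L_i = max{u ∈ S(i) : |A(u) ∩ H_i| ≥ n−2}. Then for every subset T ⊆ Z_n with |T| = c_R, the number of servers i ∈ T for which L_i is defined and equals L is at least (c_R − 1) − 2(ν − 1). -/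
open Finset

/-- key counting step for Construction 2: let `n ≥ 4` be even,
`c_R ≤ n-1`, and `H_i = ZMod n \ {i + n/2}`. Let `S` be a system state with version
sets `A(u) = {i : u ∈ S i}`, and suppose version `L` satisfies `|A(L)| ≥ n-1` while
every later version `u > L` satisfies `|A(u)| ≤ n-2`. For a server `i`, say `L_i` is
defined and equals `L` if `L ∈ S i`, `|A(L) ∩ H_i| ≥ n-2`, and every `u ∈ S i` with
`|A(u) ∩ H_i| ≥ n-2` satisfies `u ≤ L`. Then in every set `T` of `c_R` servers, at
least `(c_R - 1) - 2(ν - 1)` servers have `L_i` defined and equal to `L`. -/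
theorem construction_two_counting (n ν cR : ℕ) [NeZero n] (hn : 4 ≤ n)
    (heven : Even n) (hν : 0 < ν) (hcR0 : 0 < cR) (hcRn : cR ≤ n - 1)
    (S : ZMod n → Finset (Fin ν)) (L : Fin ν)
    (hL : n - 1 ≤ (Finset.univ.filter (fun j : ZMod n => L ∈ S j)).card)
    (hlater : ∀ u : Fin ν, L < u →
      (Finset.univ.filter (fun j : ZMod n => u ∈ S j)).card ≤ n - 2)
    (T : Finset (ZMod n)) (hT : T.card = cR) :
    (cR - 1) - 2 * (ν - 1) ≤
      (T.filter (fun i : ZMod n =>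
        L ∈ S i ∧
        n - 2 ≤ ((Finset.univ.filter (fun j : ZMod n => L ∈ S j)) ∩
            (Finset.univ.erase (i + ((n / 2 : ℕ) : ZMod n)))).card ∧
        ∀ u ∈ S i,
          n - 2 ≤ ((Finset.univ.filter (fun j : ZMod n => u ∈ S j)) ∩
              (Finset.univ.erase (i + ((n / 2 : ℕ) : ZMod n)))).card → u ≤ L)).card := by
  classical
  set h : ZMod n := ((n / 2 : ℕ) : ZMod n) with hh
  set A : Fin ν → Finset (ZMod n) := fun u => Finset.univ.filter (fun j : ZMod n => u ∈ S j) with hA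
  have hcard : Fintype.card (ZMod n) = n := ZMod.card n
  have hcompl : ∀ u, (A u)ᶜ.card + (A u).card = n := fun u => by
    rw [Finset.card_compl_add_card, hcard]
  have hinter : ∀ u x, A u ∩ Finset.univ.erase x = (A u).erase x := fun u x => by
    ext y; simp [and_comm]
  set C : Fin ν → Finset (ZMod n) := fun u =>
    Finset.univ.filter (fun i => n - 2 ≤ ((A u).erase (i + h)).card) with hC
  have hC2 : ∀ u, L < u → (C u).card ≤ 2 := by
    intro u hu
    have h1 : (A u).card ≤ n - 2 := hlater u hu
    by_cases h2 : n - 2 ≤ (A u).card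
    · have h3 : (C u).card ≤ (A u)ᶜ.card := by
        apply Finset.card_le_card_of_injOn (fun i => i + h)
        · intro i hi
          have hi' : n - 2 ≤ ((A u).erase (i + h)).card := by
            simpa [hC] using hi
          simp only [Finset.coe_compl, Set.mem_compl_iff, Finset.mem_coe]
          intro hm
          have := Finset.card_erase_add_one hm
          omega
        · intro a _ b _ hab
          exact add_right_cancel hab
      have := hcompl u
      omega
    · have : C u = ∅ := by
        apply Finset.filter_eq_empty_iff.2
        intro i _ hi
        have := Finset.card_erase_le (s := A u) (a := i + h)
        omega
      simp [this]
  have hU : ((Finset.Ioi L).biUnion C).card ≤ (Finset.Ioi L).card * 2 :=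
    Finset.card_biUnion_le_card_mul _ _ _ (fun u hu => hC2 u (Finset.mem_Ioi.1 hu))
  have hI : (Finset.Ioi L).card ≤ ν - 1 := by
    rw [Fin.card_Ioi]; omega
  have hL' : n - 1 ≤ (A L).card := hL
  have h0 := hcompl L
  set G := T.filter (fun i : ZMod n => L ∈ S i ∧ n - 2 ≤ (A L ∩ Finset.univ.erase (i + h)).card ∧
    ∀ u ∈ S i, n - 2 ≤ (A u ∩ Finset.univ.erase (i + h)).card → u ≤ L) with hG
  have hsub : T ⊆ G ∪ ((A L)ᶜ ∪ (Finset.Ioi L).biUnion C) := by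
    intro i hi
    by_contra hcon
    simp only [Finset.mem_union, not_or, Finset.mem_biUnion, not_exists, not_and] at hcon
    obtain ⟨g, a, c⟩ := hcon
    apply g
    rw [hG, Finset.mem_filter]
    refine ⟨hi, by simpa [hA] using a, ?_, ?_⟩
    · rw [hinter]
      have := Finset.pred_card_le_card_erase (s := A L) (a := i + h)
      omega
    · intro u _ hu2
      by_contra hlt
      rw [hinter] at hu2
      exact c u (Finset.mem_Ioi.2 (not_le.1 hlt)) (by simpa [hC] using hu2)
  have h1 := Finset.card_le_card hsub
  have h2 := Finset.card_union_le G ((A L)ᶜ ∪ (Finset.Ioi L).biUnion C)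
  have h3 := Finset.card_union_le (A L)ᶜ ((Finset.Ioi L).biUnion C)
  change cR - 1 - 2 * (ν - 1) ≤ G.card
  omega
end

section
/- Let K, q, c be positive integers with c ≥ 2. Suppose there exist functions a_1, …, a_{c−1} : {0,1}^K × {0,1}^K → Fin q, b : {0,1}^K × {0,1}^K → Fin q, y_1, …, y_{c−2} : {0,1}^K × {0,1}^K → Fin q, z : {0,1}^K → Fin q, and decoders D : (Fin q)^c → {0,1}^K and D' : (Fin q)^c → {0,1}^K such that for all w_1, w_2 ∈ {0,1}^K: D(a_1(w_1,w_2), …, a_{c−1}(w_1,w_2), b(w_1,w_2)) = w_2 and D'(y_1(w_1,w_2), …, y_{c−2}(w_1,w_2), b(w_1,w_2), z(w_1)) = w_1. Then q^{2c−1} ≥ 2^{2K}. -/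
/-- two-state argument for Theorem 3: suppose the later version `w₂`
is decodable by `D` from `c-1` symbols `a_j(w₁,w₂)` together with a shared symbol
`b(w₁,w₂)`, and the earlier version `w₁` is decodable by `D'` from `c-2` symbols
`y_j(w₁,w₂)`, the shared symbol `b(w₁,w₂)`, and one symbol `z(w₁)` depending only on
`w₁`, all symbols taken from an alphabet of size `q`. Then `q^(2c-1) ≥ 2^(2K)`,
i.e. `(2c-1)·log₂ q ≥ 2K`. -/
theorem two_state_argument (K q c : ℕ) (hK : 0 < K) (hq : 0 < q) (hc : 2 ≤ c)
    (a : Fin (c - 1) → (Fin K → Bool) × (Fin K → Bool) → Fin q)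
    (b : (Fin K → Bool) × (Fin K → Bool) → Fin q)
    (y : Fin (c - 2) → (Fin K → Bool) × (Fin K → Bool) → Fin q)
    (z : (Fin K → Bool) → Fin q)
    (D : (Fin (c - 1) → Fin q) → Fin q → (Fin K → Bool))
    (D' : (Fin (c - 2) → Fin q) → Fin q → Fin q → (Fin K → Bool))
    (hD : ∀ w₁ w₂ : Fin K → Bool, D (fun j => a j (w₁, w₂)) (b (w₁, w₂)) = w₂)
    (hD' : ∀ w₁ w₂ : Fin K → Bool,
      D' (fun j => y j (w₁, w₂)) (b (w₁, w₂)) (z w₁) = w₁) :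
    2 ^ (2 * K) ≤ q ^ (2 * c - 1) := by
  have hinj : Function.Injective (fun w : (Fin K → Bool) × (Fin K → Bool) =>
      (((fun j => a j w), (fun j => y j w), b w, z w.1) :
        (Fin (c - 1) → Fin q) × (Fin (c - 2) → Fin q) × Fin q × Fin q)) := by
    rintro ⟨u₁, u₂⟩ ⟨v₁, v₂⟩ h
    simp only [Prod.mk.injEq] at h
    obtain ⟨h1, h2, h3, h4⟩ := h
    have e1 : u₁ = v₁ := by rw [← hD' u₁ u₂, ← hD' v₁ v₂, h2, h3, h4]
    have e2 : u₂ = v₂ := by rw [← hD u₁ u₂, ← hD v₁ v₂, h1, h3]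
    rw [e1, e2]
  have hcard := Fintype.card_le_of_injective _ hinj
  simp only [Fintype.card_prod, Fintype.card_fun, Fintype.card_fin, Fintype.card_bool] at hcard
  have e : 2 * c - 1 = (c - 1) + ((c - 2) + (1 + 1)) := by omega
  rw [e, two_mul, pow_add, pow_add, pow_add, pow_add, pow_one]
  exact hcard
end

section
/- Let K, q, c, l be positive integers with 0 ≤ l ≤ c−1. Suppose there exist functions x_0, …, x_{c−1} : {0,1}^K × {0,1}^K → Fin q, functions y_1, …, y_{c−l−1} : {0,1}^K → Fin q, and decoders D : (Fin q)^c → {0,1}^K and D' : (Fin q)^{c} → {0,1}^K such that for all w_1, w_2 ∈ {0,1}^K: D(x_0(w_1,w_2), …, x_{c−1}(w_1,w_2)) = w_2 and D'(x_0(w_1,w_2), …, x_l(w_1,w_2), y_1(w_1), …, y_{c−l−1}(w_1)) = w_1. Then q^{2c−l−1} ≥ 2^{2K}. -/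
/-- two-state argument for Theorem 4, case (b): suppose the later
version `w₂` is decodable by `D` from the `c` symbols `x_0(w₁,w₂), …, x_{c-1}(w₁,w₂)`,
and the earlier version `w₁` is decodable by `D'` from `x_0(w₁,w₂), …, x_l(w₁,w₂)`
together with `c-l-1` symbols `y_j(w₁)` depending only on `w₁`, all symbols taken
from an alphabet of size `q`. Then `q^(2c-l-1) ≥ 2^(2K)`, i.e.
`(2c-l-1)·log₂ q ≥ 2K`. -/
theorem two_state_argument_l (K q c l : ℕ) (hK : 0 < K) (hq : 0 < q) (hc : 0 < c)
    (hl : l ≤ c - 1)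
    (x : Fin c → (Fin K → Bool) × (Fin K → Bool) → Fin q)
    (y : Fin (c - l - 1) → (Fin K → Bool) → Fin q)
    (D : (Fin c → Fin q) → (Fin K → Bool))
    (D' : (Fin (l + 1) → Fin q) → (Fin (c - l - 1) → Fin q) → (Fin K → Bool))
    (hD : ∀ w₁ w₂ : Fin K → Bool, D (fun j => x j (w₁, w₂)) = w₂)
    (hD' : ∀ w₁ w₂ : Fin K → Bool,
      D' (fun j => x (Fin.castLE (by omega) j) (w₁, w₂)) (fun j => y j w₁) = w₁) :
    2 ^ (2 * K) ≤ q ^ (2 * c - l - 1) := by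
  have hinj : Function.Injective
      (fun p : (Fin K → Bool) × (Fin K → Bool) =>
        ((fun j => x j p, fun j => y j p.1) :
          (Fin c → Fin q) × (Fin (c - l - 1) → Fin q))) := by
    rintro ⟨a, b⟩ ⟨a', b'⟩ h
    have h1 : (fun j => x j (a, b)) = (fun j => x j (a', b')) := congrArg Prod.fst h
    have h2 : (fun j => y j a) = (fun j => y j a') := congrArg Prod.snd h
    have hb : b = b' := by rw [← hD a b, h1, hD]
    have h3 : (fun j : Fin (l + 1) => x (Fin.castLE (by omega) j) (a, b)) =
        (fun j => x (Fin.castLE (by omega) j) (a', b')) := by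
      funext j
      exact congrFun h1 _
    have ha : a = a' := by rw [← hD' a b, h3, h2, hD']
    rw [ha, hb]
  have hcard := Fintype.card_le_of_injective _ hinj
  simp only [Fintype.card_prod, Fintype.card_fun, Fintype.card_fin, Fintype.card_bool,
    ← pow_add] at hcard
  have e1 : 2 * K = K + K := by omega
  have e2 : 2 * c - l - 1 = c + (c - l - 1) := by omega
  rw [e1, e2]
  exact hcard
end
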